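/- arXiv:math/0405450 — 8 statements merged into one kernel-verified Lean document; each statement's English description precedes it below -/
import Mathlib

section
/- The group G̃ is isomorphic to the direct product S₄ × C₂ of the symmetric group on four letters with a cyclic group of order 2. -/
open Matrix

abbrev F2 := ZMod 2

/-- Conjugation by `C ∈ GL₂(R)` as an automorphism of the additive group of `2×2`
matrices over `R` (written multiplicatively). -/
def conjAut {R : Type} [CommRing R] (C : GL (Fin 2) R) :
    MulAut (Multiplicative (Matrix (Fin 2) (Fin 2) R)) where
  toFun A := Multiplicative.ofAdd
    ((C : Matrix (Fin 2) (Fin 2) R) * (Multiplicative.toAdd A) *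
      ((C⁻¹ : GL (Fin 2) R) : Matrix (Fin 2) (Fin 2) R))
  invFun A := Multiplicative.ofAdd
    (((C⁻¹ : GL (Fin 2) R) : Matrix (Fin 2) (Fin 2) R) * (Multiplicative.toAdd A) *
      (C : Matrix (Fin 2) (Fin 2) R))
  left_inv A := by simp [mul_assoc]
  right_inv A := by simp [mul_assoc]
  map_mul' A B := by
    simp [mul_add, add_mul, ← ofAdd_add]

/-- Conjugation as an action of `GL₂(R)` by automorphisms on the additive group of
`2×2` matrices, i.e. the defining homomorphism of `M₂(R) ⋊ GL₂(R)`. -/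
def conjHom (R : Type) [CommRing R] :
    GL (Fin 2) R →* MulAut (Multiplicative (Matrix (Fin 2) (Fin 2) R)) where
  toFun := conjAut
  map_one' := by ext A; simp [conjAut]
  map_mul' C D := by ext A; simp [conjAut, mul_assoc]

/-- `M₂(R) ⋊ GL₂(R)`, the semidirect product of the additive group of `2×2` matrices
by `GL₂(R)` acting by conjugation; the group law is `(A,C)·(B,D) = (A + C B C⁻¹, C D)`. -/
abbrev MGL (R : Type) [CommRing R] :=
  SemidirectProduct (Multiplicative (Matrix (Fin 2) (Fin 2) R)) (GL (Fin 2) R) (conjHom R)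

lemma trace_conj_GL {R : Type} [CommRing R] (C : GL (Fin 2) R)
    (M : Matrix (Fin 2) (Fin 2) R) :
    ((C : Matrix (Fin 2) (Fin 2) R) * M *
      ((C⁻¹ : GL (Fin 2) R) : Matrix (Fin 2) (Fin 2) R)).trace = M.trace := by
  rw [Matrix.trace_mul_cycle]
  simp [mul_assoc]

/-- `G̃`: the subgroup of `M₂(𝔽₂) ⋊ GL₂(𝔽₂)` of pairs `(A, C)` with `tr A = 0`. -/
def Gtilde : Subgroup (MGL F2) where
  carrier := {x | Matrix.trace (Multiplicative.toAdd x.left) = 0}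
  one_mem' := by simp
  mul_mem' {x y} hx hy := by
    have hx' : Matrix.trace (Multiplicative.toAdd x.left) = 0 := hx
    have hy' : Matrix.trace (Multiplicative.toAdd y.left) = 0 := hy
    show Matrix.trace (Multiplicative.toAdd (x * y).left) = 0
    rw [SemidirectProduct.mul_left]
    show Matrix.trace (Multiplicative.toAdd x.left +
      ((x.right : Matrix (Fin 2) (Fin 2) F2) * (Multiplicative.toAdd y.left) *
        ((x.right⁻¹ : GL (Fin 2) F2) : Matrix (Fin 2) (Fin 2) F2))) = 0
    rw [Matrix.trace_add, trace_conj_GL, hx', hy', add_zero]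
  inv_mem' {x} hx := by
    have hx' : Matrix.trace (Multiplicative.toAdd x.left) = 0 := hx
    show Matrix.trace (Multiplicative.toAdd x⁻¹.left) = 0
    rw [SemidirectProduct.inv_left]
    show Matrix.trace
      (((x.right⁻¹ : GL (Fin 2) F2) : Matrix (Fin 2) (Fin 2) F2) *
        (Multiplicative.toAdd x.left⁻¹) *
        ((x.right⁻¹⁻¹ : GL (Fin 2) F2) : Matrix (Fin 2) (Fin 2) F2)) = 0
    rw [trace_conj_GL]
    simp [hx']

/-- The off-diagonal entries of a matrix over `𝔽₂`, as a vector. On trace-zero matrices this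
intertwines conjugation with the standard action, with kernel spanned by the identity. -/
def offDiag (A : Matrix (Fin 2) (Fin 2) F2) : Fin 2 → F2 := ![A 0 1, A 1 0]

/-- A linear functional which is conjugation-invariant on trace-zero matrices over `𝔽₂`
and takes the value `1` at the identity. -/
def invariantFunctional (A : Matrix (Fin 2) (Fin 2) F2) : F2 := A 0 0 + A 0 1 + A 1 0

lemma GL_inv_eq_adjugate (C : GL (Fin 2) F2) :
    ((C⁻¹ : GL (Fin 2) F2) : Matrix (Fin 2) (Fin 2) F2) = (C : Matrix _ _ F2).adjugate := by
  have h : (C : Matrix (Fin 2) (Fin 2) F2).det = 1 :=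
    Fin.eq_one_of_ne_zero _ (C.isUnit.map Matrix.detMonoidHom).ne_zero
  rw [Matrix.coe_units_inv, Matrix.inv_def, h, Ring.inverse_one, one_smul]

lemma offDiag_conj_and_invariantFunctional_conj (C : GL (Fin 2) F2)
    (A : Matrix (Fin 2) (Fin 2) F2) (hA : A.trace = 0) :
    offDiag (C.1 * A * (C⁻¹).1) = C.1 *ᵥ offDiag A ∧
      invariantFunctional (C.1 * A * (C⁻¹).1) = invariantFunctional A := by
  have hdet : C.1.det ≠ 0 := (C.isUnit.map Matrix.detMonoidHom).ne_zero
  rw [GL_inv_eq_adjugate]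
  generalize C.1 = M at *
  have hA' : A 1 1 = A 0 0 := by
    rw [Matrix.trace_fin_two] at hA
    generalize A 0 0 = a at *
    generalize A 1 1 = d at *
    decide +revert
  rw [Matrix.det_fin_two] at hdet
  simp only [offDiag, invariantFunctional, Matrix.adjugate_fin_two, Matrix.mul_apply,
    Fin.sum_univ_two, Matrix.of_apply, Matrix.cons_val_zero, Matrix.cons_val_one, hA',
    funext_iff, Fin.forall_fin_two, Matrix.mulVec, dotProduct, Matrix.cons_val',
    Matrix.cons_val_fin_one]
  clear hA hA'
  generalize A 0 0 = a, A 0 1 = b, A 1 0 = c at *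
  generalize M 0 0 = x, M 0 1 = y, M 1 0 = z, M 1 1 = w at *
  decide +revert

/-- The action of `G̃` on `𝔽₂²` by affine maps. -/
def affineHom : Gtilde →* Equiv.Perm (Fin 2 → F2) :=
  MonoidHom.toHomPerm
    { toFun := fun g v => g.1.right.1 *ᵥ v + offDiag g.1.left.toAdd
      map_one' := by
        funext v
        have hzero : offDiag 0 = 0 := by
          ext i
          fin_cases i <;> rfl
        change (1 : Matrix (Fin 2) (Fin 2) F2) *ᵥ v + offDiag 0 = v
        rw [hzero, Matrix.one_mulVec, add_zero]
      map_mul' := fun g h => by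
        funext v
        have key := (offDiag_conj_and_invariantFunctional_conj g.1.right h.1.left.toAdd h.2).1
        have hadd : ∀ A B, offDiag (A + B) = offDiag A + offDiag B := fun A B => by
          ext i
          fin_cases i <;> rfl
        change (g.1.right.1 * h.1.right.1) *ᵥ v + offDiag (g.1.left.toAdd +
            g.1.right.1 * h.1.left.toAdd * (g.1.right⁻¹).1) =
          g.1.right.1 *ᵥ (h.1.right.1 *ᵥ v + offDiag h.1.left.toAdd) + offDiag g.1.left.toAdd
        rw [hadd, key, Matrix.mulVec_add, Matrix.mulVec_mulVec]
        abel }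

/-- The character of `G̃` induced by the invariant functional. -/
def functionalHom : Gtilde →* Multiplicative (ZMod 2) where
  toFun g := Multiplicative.ofAdd (invariantFunctional g.1.left.toAdd)
  map_one' := by simp [invariantFunctional]
  map_mul' g h := by
    have key := (offDiag_conj_and_invariantFunctional_conj g.1.right h.1.left.toAdd h.2).2
    have hadd : ∀ A B, invariantFunctional (A + B) =
        invariantFunctional A + invariantFunctional B := fun A B => by
      simp only [invariantFunctional, Matrix.add_apply]
      ring
    change Multiplicative.ofAdd (invariantFunctional (g.1.left.toAdd +
      g.1.right.1 * h.1.left.toAdd * (g.1.right⁻¹).1)) = _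
    rw [hadd, key, ofAdd_add]

lemma affineHom_prod_functionalHom_injective :
    Function.Injective (affineHom.prod functionalHom) := by
  rw [injective_iff_map_eq_one]
  rintro ⟨⟨A, C⟩, hA⟩ hg
  obtain ⟨h₁, h₂⟩ := Prod.ext_iff.mp hg
  have haff : ∀ v, C.1 *ᵥ v + offDiag A.toAdd = v := fun v => DFunLike.congr_fun h₁ v
  have hfun : invariantFunctional A.toAdd = 0 := h₂
  have hoff : offDiag A.toAdd = 0 := by simpa using haff 0
  have hC : C = 1 := by
    apply Units.ext
    apply Matrix.ext_of_mulVec_single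
    intro i
    rw [Units.val_one, Matrix.one_mulVec]
    simpa only [hoff, add_zero] using haff (Pi.single i 1)
  have h01 : A.toAdd 0 1 = 0 := congr_fun hoff 0
  have h10 : A.toAdd 1 0 = 0 := congr_fun hoff 1
  have h00 : A.toAdd 0 0 = 0 := by simpa [invariantFunctional, h01, h10] using hfun
  have h11 : A.toAdd 1 1 = 0 := by
    have : A.toAdd.trace = 0 := hA
    simpa [Matrix.trace_fin_two, h00] using this
  have hA0 : A = 1 := by
    apply Multiplicative.toAdd.injective
    ext i j
    fin_cases i <;> fin_cases j <;> assumption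
  subst hC hA0
  rfl

/-- A trace-zero matrix over `𝔽₂` is determined by its first row and lower left entry. -/
def traceZeroEquiv :
    {A : Matrix (Fin 2) (Fin 2) F2 // A.trace = 0} ≃ F2 × F2 × F2 where
  toFun A := (A.1 0 0, A.1 0 1, A.1 1 0)
  invFun p := ⟨!![p.1, p.2.1; p.2.2, p.1],
    by simp [Matrix.trace_fin_two, CharTwo.add_self_eq_zero]⟩
  left_inv := by
    rintro ⟨A, hA⟩
    rw [Matrix.trace_fin_two, CharTwo.add_eq_zero] at hA
    ext i j
    fin_cases i <;> fin_cases j <;> simp [hA]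
  right_inv _ := rfl

/-- The underlying type of `G̃` is a product of trace-zero matrices and `GL₂(𝔽₂)`. -/
def GtildeEquivProd :
    Gtilde ≃ {A : Matrix (Fin 2) (Fin 2) F2 // A.trace = 0} × GL (Fin 2) F2 where
  toFun g := (⟨g.1.left.toAdd, g.2⟩, g.1.right)
  invFun p := ⟨⟨Multiplicative.ofAdd p.1.1, p.2⟩, p.1.2⟩
  left_inv _ := rfl
  right_inv _ := rfl

lemma card_Gtilde : Nat.card Gtilde = 48 := by
  rw [Nat.card_congr (GtildeEquivProd.trans (traceZeroEquiv.prodCongr (Equiv.refl _))),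
    Nat.card_prod, Matrix.card_GL_field]
  simp [Fin.prod_univ_two]

/-- The group `G̃` is isomorphic to `S₄ × C₂`. -/
theorem Gtilde_iso_S4_times_C2 :
    Nonempty (↥Gtilde ≃* Equiv.Perm (Fin 4) × Multiplicative (ZMod 2)) := by
  have hcard : Nat.card Gtilde =
      Nat.card (Equiv.Perm (Fin 2 → F2) × Multiplicative (ZMod 2)) := by
    rw [card_Gtilde, Nat.card_prod, Nat.card_perm]
    simp [Nat.factorial]
  have hbij := (Nat.bijective_iff_injective_and_card _).mpr
    ⟨affineHom_prod_functionalHom_injective, hcard⟩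
  have e : (Fin 2 → F2) ≃ Fin 4 := Fintype.equivFinOfCardEq (by simp)
  exact ⟨(MulEquiv.ofBijective _ hbij).trans (e.permCongrHom.prodCongr (MulEquiv.refl _))⟩
end

section
/- For every element (A, C) of G̃, the trace of the matrix product A·C equals 1 if and only if the order of (A, C) in G̃ is greater than 3 (equivalently, equal to 4 or 6). -/
open Matrix

/-- The Cayley–Hamilton identity for `2×2` matrices. -/
lemma mul_self_eq_trace_smul_sub_det {R : Type} [CommRing R] (C : Matrix (Fin 2) (Fin 2) R) :
    C * C = C.trace • C - C.det • (1 : Matrix (Fin 2) (Fin 2) R) := by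
  ext i j
  fin_cases i <;> fin_cases j <;>
    simp [Matrix.mul_apply, Fin.sum_univ_two, Matrix.trace_fin_two, Matrix.det_fin_two] <;> ring

/-- The polarized Cayley–Hamilton identity for `2×2` matrices, with one factor traceless. -/
lemma mul_add_mul_comm_of_trace_eq_zero {R : Type} [CommRing R]
    {A : Matrix (Fin 2) (Fin 2) R} (hA : A.trace = 0) (C : Matrix (Fin 2) (Fin 2) R) :
    A * C + C * A = C.trace • A + (A * C).trace • (1 : Matrix (Fin 2) (Fin 2) R) := by
  rw [Matrix.trace_fin_two] at hA
  obtain hA := eq_neg_of_add_eq_zero_right hA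
  ext i j
  fin_cases i <;> fin_cases j <;>
    simp [Matrix.mul_apply, Fin.sum_univ_two, Matrix.trace_fin_two, hA] <;> ring

lemma F2_eq_one_of_ne_zero {a : F2} (h : a ≠ 0) : a = 1 := by
  revert a
  decide

lemma GL_F2_mul_self (C : GL (Fin 2) F2) :
    (C : Matrix (Fin 2) (Fin 2) F2) * C =
      (C : Matrix (Fin 2) (Fin 2) F2).trace • (C : Matrix (Fin 2) (Fin 2) F2) + 1 := by
  have hdet : (C : Matrix (Fin 2) (Fin 2) F2).det = 1 :=
    F2_eq_one_of_ne_zero ((Matrix.isUnit_iff_isUnit_det _).1 C.isUnit).ne_zero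
  rw [mul_self_eq_trace_smul_sub_det, hdet, one_smul, CharTwo.sub_eq_add]

lemma MGL_mul_left {R : Type} [CommRing R] (x y : MGL R) :
    Multiplicative.toAdd (x * y).left = Multiplicative.toAdd x.left +
      (x.right : Matrix (Fin 2) (Fin 2) R) * Multiplicative.toAdd y.left *
        ((x.right⁻¹ : GL (Fin 2) R) : Matrix (Fin 2) (Fin 2) R) := rfl

lemma MGL_eq_one_iff {R : Type} [CommRing R] (x : MGL R) :
    x = 1 ↔ Multiplicative.toAdd x.left = 0 ∧ x.right = 1 := SemidirectProduct.ext_iff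

/-- Elements with trivial `GL₂(𝔽₂)` component square to the identity. -/
lemma MGL_sq_eq_one_of_right_eq_one {x : MGL F2} (hx : x.right = 1) : x ^ 2 = 1 := by
  rw [MGL_eq_one_iff, pow_two, MGL_mul_left, SemidirectProduct.mul_right, hx]
  simp [CharTwo.add_self_eq_zero]

lemma MGL_sq_right_of_trace_eq_zero {x : MGL F2}
    (hC : (x.right : Matrix (Fin 2) (Fin 2) F2).trace = 0) : (x ^ 2).right = 1 := by
  rw [pow_two, SemidirectProduct.mul_right]
  ext1
  simpa [hC] using GL_F2_mul_self x.right

lemma MGL_sq_left_of_trace_eq_zero {x : MGL F2}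
    (hA : (Multiplicative.toAdd x.left).trace = 0)
    (hC : (x.right : Matrix (Fin 2) (Fin 2) F2).trace = 0) :
    Multiplicative.toAdd (x ^ 2).left =
      (Multiplicative.toAdd x.left * (x.right : Matrix (Fin 2) (Fin 2) F2)).trace •
        (x.right : Matrix (Fin 2) (Fin 2) F2) := by
  have hsq := GL_F2_mul_self x.right
  have hinv : x.right⁻¹ = x.right := inv_eq_of_mul_eq_one_left (by ext1; simpa [hC] using hsq)
  have hpol := congrArg (· * (x.right : Matrix (Fin 2) (Fin 2) F2))
    (mul_add_mul_comm_of_trace_eq_zero hA (x.right : Matrix (Fin 2) (Fin 2) F2))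
  rw [hC, zero_smul, zero_add] at hsq hpol
  simp only [add_mul, mul_assoc, hsq, mul_one, Matrix.smul_mul, one_mul] at hpol
  rw [pow_two, MGL_mul_left, hinv, mul_assoc, hpol]

lemma GL_F2_mul_self_eq_inv {C : GL (Fin 2) F2}
    (hC : (C : Matrix (Fin 2) (Fin 2) F2).trace = 1) : C * C = C⁻¹ := by
  have hsq := GL_F2_mul_self C
  rw [hC, one_smul] at hsq
  refine eq_inv_of_mul_eq_one_left ?_
  ext1
  simp only [Units.val_mul, Units.val_one]
  rw [hsq, add_mul, one_mul, hsq, add_right_comm, CharTwo.add_self_eq_zero, zero_add]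

lemma MGL_cube_right_of_trace_eq_one {x : MGL F2}
    (hC : (x.right : Matrix (Fin 2) (Fin 2) F2).trace = 1) : (x ^ 3).right = 1 := by
  rw [pow_succ, pow_two, SemidirectProduct.mul_right, SemidirectProduct.mul_right,
    GL_F2_mul_self_eq_inv hC, inv_mul_cancel]

lemma MGL_cube_left_of_trace_eq_one {x : MGL F2}
    (hA : (Multiplicative.toAdd x.left).trace = 0)
    (hC : (x.right : Matrix (Fin 2) (Fin 2) F2).trace = 1) :
    Multiplicative.toAdd (x ^ 3).left =
      (Multiplicative.toAdd x.left * (x.right : Matrix (Fin 2) (Fin 2) F2)).trace •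
        (1 : Matrix (Fin 2) (Fin 2) F2) := by
  have hsq := GL_F2_mul_self x.right
  have hinv := GL_F2_mul_self_eq_inv hC
  have hpol := mul_add_mul_comm_of_trace_eq_zero hA (x.right : Matrix (Fin 2) (Fin 2) F2)
  rw [hC, one_smul] at hsq hpol
  rw [pow_succ, pow_two, MGL_mul_left, MGL_mul_left, SemidirectProduct.mul_right, hinv, inv_inv,
    ← hinv, Units.val_mul, hsq]
  generalize (Multiplicative.toAdd x.left * (x.right : Matrix (Fin 2) (Fin 2) F2)).trace •
    (1 : Matrix (Fin 2) (Fin 2) F2) = T at *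
  generalize (x.right : Matrix (Fin 2) (Fin 2) F2) = C at *
  generalize Multiplicative.toAdd x.left = A at *
  have hT : T = A + (A * C + C * A) := by
    rw [hpol, ← add_assoc, CharTwo.add_self_eq_zero, zero_add]
  have hCAC := CharTwo.add_self_eq_zero (C * A * C)
  calc A + C * A * (C + 1) + (C + 1) * A * C
      = A + (A * C + C * A) + (C * A * C + C * A * C) := by noncomm_ring
    _ = T := by rw [hCAC, add_zero, hT]

/-- For `(A, C) ∈ G̃`, one has `tr (A·C) = 1` iff the order of `(A, C)` in `G̃` is
greater than 3, equivalently equal to 4 or 6. -/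
theorem trace_mul_eq_one_iff_orderOf_gt_three (x : ↥Gtilde) :
    ((Multiplicative.toAdd (x : MGL F2).left *
        ((x : MGL F2).right : Matrix (Fin 2) (Fin 2) F2)).trace = 1 ↔ 3 < orderOf x) ∧
    (3 < orderOf x ↔ orderOf x = 4 ∨ orderOf x = 6) := by
  rw [← Subgroup.orderOf_coe]
  obtain ⟨x, hx⟩ := x
  have hA : (Multiplicative.toAdd x.left).trace = 0 := hx
  dsimp only
  by_cases hC : (x.right : Matrix (Fin 2) (Fin 2) F2).trace = 0
  · have hr := MGL_sq_right_of_trace_eq_zero hC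
    have hl := MGL_sq_left_of_trace_eq_zero hA hC
    by_cases hτ : (Multiplicative.toAdd x.left *
        (x.right : Matrix (Fin 2) (Fin 2) F2)).trace = 0
    · have hord : orderOf x ≤ 2 := orderOf_le_of_pow_eq_one two_pos <|
        (MGL_eq_one_iff _).2 ⟨by rw [hl, hτ, zero_smul], hr⟩
      rw [hτ]
      exact ⟨⟨fun h => absurd h zero_ne_one, by omega⟩, by omega⟩
    · have hτ := F2_eq_one_of_ne_zero hτ
      have hord : orderOf x = 4 := by
        refine orderOf_eq_prime_pow (p := 2) (n := 1) (fun h => ?_) ?_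
        · rw [pow_one, MGL_eq_one_iff, hl, hτ, one_smul] at h
          exact x.right.ne_zero h.1
        · rw [pow_succ, pow_one, pow_mul]
          exact MGL_sq_eq_one_of_right_eq_one hr
      simp [hτ, hord]
  · have hC := F2_eq_one_of_ne_zero hC
    have hr := MGL_cube_right_of_trace_eq_one hC
    have hl := MGL_cube_left_of_trace_eq_one hA hC
    by_cases hτ : (Multiplicative.toAdd x.left *
        (x.right : Matrix (Fin 2) (Fin 2) F2)).trace = 0
    · have hord : orderOf x ≤ 3 := orderOf_le_of_pow_eq_one three_pos <|
        (MGL_eq_one_iff _).2 ⟨by rw [hl, hτ, zero_smul], hr⟩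
      rw [hτ]
      exact ⟨⟨fun h => absurd h zero_ne_one, by omega⟩, by omega⟩
    · have hτ := F2_eq_one_of_ne_zero hτ
      have hcube : x ^ 3 ≠ 1 := fun h => by
        rw [MGL_eq_one_iff, hl, hτ, one_smul] at h
        exact one_ne_zero h.1
      have hsq : x ^ 2 ≠ 1 := fun h => by
        have hinv : x.right⁻¹ = 1 := by
          rw [← GL_F2_mul_self_eq_inv hC, ← pow_two]
          simpa [pow_two] using congrArg SemidirectProduct.right h
        rw [inv_eq_one.1 hinv, Units.val_one, Matrix.trace_one] at hC
        exact absurd hC (by decide)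
      have hdvd : orderOf x ∣ 6 := orderOf_dvd_of_pow_eq_one <| by
        rw [show 6 = 3 * 2 from rfl, pow_mul]
        exact MGL_sq_eq_one_of_right_eq_one hr
      have hord : orderOf x = 6 := by
        rw [ne_eq, ← orderOf_dvd_iff_pow_eq_one] at hcube hsq
        have hle := Nat.le_of_dvd (by norm_num) hdvd
        interval_cases orderOf x <;> revert hdvd hcube hsq <;> decide
      simp [hτ, hord]
end

section
/- Let H be a subgroup of G̃ such that the projection of H to the second factor GL₂(𝔽₂) is all of GL₂(𝔽₂), and suppose H contains an element of order 4 or of order 6. Then H contains a subgroup isomorphic to S₃ × C₂ or a subgroup isomorphic to S₄. -/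
open Matrix

/-- The linear form on `M₂(𝔽₂)` whose restriction to the trace zero matrices is the projection
to the scalars along `{0} ∪ {involutions}`. -/
def scalarPart (A : Matrix (Fin 2) (Fin 2) F2) : F2 := A 0 0 + A 0 1 + A 1 0

lemma offDiag_conj : ∀ (C : GL (Fin 2) F2) (A : Matrix (Fin 2) (Fin 2) F2), A.trace = 0 →
    offDiag ((C : Matrix (Fin 2) (Fin 2) F2) * A * ((C⁻¹ : GL (Fin 2) F2) :
      Matrix (Fin 2) (Fin 2) F2)) = (C : Matrix (Fin 2) (Fin 2) F2) *ᵥ offDiag A := by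
  decide +kernel

lemma scalarPart_conj : ∀ (C : GL (Fin 2) F2) (A : Matrix (Fin 2) (Fin 2) F2), A.trace = 0 →
    scalarPart ((C : Matrix (Fin 2) (Fin 2) F2) * A * ((C⁻¹ : GL (Fin 2) F2) :
      Matrix (Fin 2) (Fin 2) F2)) = scalarPart A := by
  decide +kernel

lemma eq_of_offDiag_eq_of_scalarPart_eq {A B : Matrix (Fin 2) (Fin 2) F2} (hA : A.trace = 0)
    (hB : B.trace = 0) (ho : offDiag A = offDiag B) (hs : scalarPart A = scalarPart B) :
    A = B := by
  have h01 : A 0 1 = B 0 1 := congrFun ho 0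
  have h10 : A 1 0 = B 1 0 := congrFun ho 1
  have h00 : A 0 0 = B 0 0 := by simpa [scalarPart, h01, h10] using hs
  have h11 : A 1 1 = B 1 1 := by
    rw [Matrix.trace_fin_two] at hA hB
    rw [h00, ← hB] at hA
    exact add_left_cancel hA
  ext i j
  fin_cases i <;> fin_cases j <;> assumption

lemma GL2_F2_sq_or_cube (C : GL (Fin 2) F2) : C ^ 2 = 1 ∨ C ^ 3 = 1 := by
  revert C; decide +kernel

lemma GL2_F2_eq_one_of_fixes : ∀ C : GL (Fin 2) F2,
    (∀ v, (C : Matrix (Fin 2) (Fin 2) F2) *ᵥ v = v) → C = 1 := by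
  decide +kernel

lemma GL2_F2_fixed_eq_zero {C : GL (Fin 2) F2} {v : Fin 2 → F2} (h3 : C ^ 3 = 1)
    (h2 : C ^ 2 ≠ 1) (hv : (C : Matrix (Fin 2) (Fin 2) F2) *ᵥ v = v) : v = 0 := by
  have key : ∀ (C : GL (Fin 2) F2) (v : Fin 2 → F2),
      C ^ 3 = 1 ∧ C ^ 2 ≠ 1 ∧ (C : Matrix (Fin 2) (Fin 2) F2) *ᵥ v = v → v = 0 := by
    decide +kernel
  exact key C v ⟨h3, h2, hv⟩

lemma GL2_F2_transitive : ∀ v w : Fin 2 → F2, v ≠ 0 → w ≠ 0 →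
    ∃ C : GL (Fin 2) F2, (C : Matrix (Fin 2) (Fin 2) F2) *ᵥ v = w := by
  decide +kernel

lemma perm_plane_affine : ∀ s : Equiv.Perm (Fin 2 → F2), ∃ C : GL (Fin 2) F2,
    ∀ v, s v = s 0 + (C : Matrix (Fin 2) (Fin 2) F2) *ᵥ v := by
  decide +kernel

lemma GL2_inv_mulVec_mulVec (C : GL (Fin 2) F2) (v : Fin 2 → F2) :
    ((C⁻¹ : GL (Fin 2) F2) : Matrix (Fin 2) (Fin 2) F2) *ᵥ
      ((C : Matrix (Fin 2) (Fin 2) F2) *ᵥ v) = v := by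
  rw [Matrix.mulVec_mulVec, ← Units.val_mul, inv_mul_cancel, Units.val_one, Matrix.one_mulVec]

lemma GL2_mulVec_ne_zero (C : GL (Fin 2) F2) {v : Fin 2 → F2} (hv : v ≠ 0) :
    (C : Matrix (Fin 2) (Fin 2) F2) *ᵥ v ≠ 0 := fun h =>
  hv (by rw [← GL2_inv_mulVec_mulVec C v, h, Matrix.mulVec_zero])

/-- The permutation representation of `GL₂(𝔽₂)` on the nonzero vectors of the plane. -/
def GL2PermNonzero : GL (Fin 2) F2 →* Equiv.Perm {v : Fin 2 → F2 // v ≠ 0} where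
  toFun C :=
    { toFun := fun v => ⟨(C : Matrix (Fin 2) (Fin 2) F2) *ᵥ v.1, GL2_mulVec_ne_zero C v.2⟩
      invFun := fun v => ⟨((C⁻¹ : GL (Fin 2) F2) : Matrix (Fin 2) (Fin 2) F2) *ᵥ v.1,
        GL2_mulVec_ne_zero C⁻¹ v.2⟩
      left_inv := fun v => Subtype.ext (GL2_inv_mulVec_mulVec C v)
      right_inv := fun v => Subtype.ext (GL2_inv_mulVec_mulVec C⁻¹ v) }
  map_one' := by ext v : 2; exact Matrix.one_mulVec v.1
  map_mul' C D := by ext v : 2; exact (Matrix.mulVec_mulVec v.1 C.1 D.1).symm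

lemma GL2PermNonzero_bijective : Function.Bijective GL2PermNonzero := by
  decide +kernel

lemma nonempty_GL2_F2_mulEquiv_perm : Nonempty (GL (Fin 2) F2 ≃* Equiv.Perm (Fin 3)) := by
  have hcard : Fintype.card {v : Fin 2 → F2 // v ≠ 0} = 3 := by decide
  exact ⟨(MulEquiv.ofBijective _ GL2PermNonzero_bijective).trans
    (Fintype.equivFinOfCardEq hcard).permCongrHom⟩

lemma nonempty_mulEquiv_of_map_eq_top {G P : Type*} [Group G] [Group P] (f : G →* P)
    (K : Subgroup G) (hsurj : K.map f = ⊤) (hinj : ∀ x ∈ K, f x = 1 → x = 1) :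
    Nonempty (K ≃* P) := by
  refine ⟨MulEquiv.ofBijective (f.comp K.subtype) ⟨?_, fun p => ?_⟩⟩
  · rw [injective_iff_map_eq_one]
    exact fun x hx => Subtype.ext (hinj x x.2 hx)
  · obtain ⟨x, hx, rfl⟩ : p ∈ K.map f := hsurj ▸ Subgroup.mem_top p
    exact ⟨⟨x, hx⟩, rfl⟩

namespace Gtilde

/-- The projection of `G̃` to `GL₂(𝔽₂)`. -/
def proj : Gtilde →* GL (Fin 2) F2 := SemidirectProduct.rightHom.comp Gtilde.subtype

/-- The matrix component of an element of `G̃`. -/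
def mat (g : Gtilde) : Matrix (Fin 2) (Fin 2) F2 := Multiplicative.toAdd g.1.left

lemma trace_mat (g : Gtilde) : (mat g).trace = 0 := g.2

/-- The translation part of an element of `G̃`, seen as an affine transformation of the plane. -/
def trans (g : Gtilde) : Fin 2 → F2 := offDiag (mat g)

/-- The linear part, in matrix form, of an element of `G̃`. -/
def lin (g : Gtilde) : Matrix (Fin 2) (Fin 2) F2 := (proj g : Matrix (Fin 2) (Fin 2) F2)

lemma mat_mul (g h : Gtilde) : mat (g * h) = mat g + lin g * mat h *
    (((proj g)⁻¹ : GL (Fin 2) F2) : Matrix (Fin 2) (Fin 2) F2) := rfl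

lemma trans_mul (g h : Gtilde) : trans (g * h) = trans g + lin g *ᵥ trans h := by
  rw [trans, mat_mul, trans, trans, lin, ← offDiag_conj _ _ (trace_mat h)]
  ext i
  fin_cases i <;> rfl

lemma trans_one : trans 1 = 0 := by
  ext i
  fin_cases i <;> rfl

lemma lin_mul (g h : Gtilde) : lin (g * h) = lin g * lin h := by simp [lin]

lemma lin_one : lin 1 = 1 := by simp [lin]

lemma lin_of_proj_eq_one {g : Gtilde} (hg : proj g = 1) : lin g = 1 := by simp [lin, hg]

/-- The character of `G̃` given by the scalar part of the matrix component. -/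
def char : Gtilde →* Multiplicative F2 :=
  MonoidHom.mk' (fun g => Multiplicative.ofAdd (scalarPart (mat g))) fun g h => by
    rw [← ofAdd_add, mat_mul, lin, ← scalarPart_conj (proj g) _ (trace_mat h)]
    congr 1
    simp only [scalarPart, Matrix.add_apply]
    ring

/-- The affine action of `G̃` on the plane. -/
def affine : Gtilde →* Equiv.Perm (Fin 2 → F2) :=
  letI : MulAction Gtilde (Fin 2 → F2) :=
    { smul := fun g v => trans g + lin g *ᵥ v
      one_smul := fun v => by
        change trans 1 + lin 1 *ᵥ v = v
        simp [trans_one, lin_one]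
      mul_smul := fun g h v => by
        change trans (g * h) + lin (g * h) *ᵥ v = trans g + lin g *ᵥ (trans h + lin h *ᵥ v)
        rw [trans_mul, lin_mul, Matrix.mulVec_add, Matrix.mulVec_mulVec, add_assoc] }
  MulAction.toPermHom Gtilde (Fin 2 → F2)

lemma affine_apply (g : Gtilde) (v : Fin 2 → F2) : affine g v = trans g + lin g *ᵥ v := rfl

lemma ext_parts {g h : Gtilde} (hp : proj g = proj h) (ht : trans g = trans h)
    (hc : char g = char h) : g = h :=
  Subtype.ext (SemidirectProduct.ext (Multiplicative.toAdd.injective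
    (eq_of_offDiag_eq_of_scalarPart_eq (trace_mat g) (trace_mat h) ht
      (Multiplicative.ofAdd.injective hc))) hp)

/-- The central element `(I, 1)` of `G̃`. -/
def centre : Gtilde := ⟨⟨Multiplicative.ofAdd 1, 1⟩, by
  change Matrix.trace (1 : Matrix (Fin 2) (Fin 2) F2) = 0
  decide⟩

lemma proj_centre : proj centre = 1 := rfl

lemma trans_centre : trans centre = 0 := by
  ext i
  fin_cases i <;> rfl

lemma char_centre : char centre = Multiplicative.ofAdd 1 := rfl

lemma affine_centre : affine centre = 1 := by
  ext v : 1
  simp [affine_apply, trans_centre, lin_of_proj_eq_one proj_centre]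

lemma char_eq_one_or (c : Multiplicative F2) : c = 1 ∨ c = Multiplicative.ofAdd 1 := by
  revert c; decide

lemma eq_one_or_eq_centre {g : Gtilde} (hp : proj g = 1) (ht : trans g = 0) :
    g = 1 ∨ g = centre := by
  rcases char_eq_one_or (char g) with hc | hc
  · exact .inl (ext_parts (by simpa using hp) (ht.trans trans_one.symm) (by simpa using hc))
  · exact .inr (ext_parts (hp.trans proj_centre.symm) (ht.trans trans_centre.symm)
      (hc.trans char_centre.symm))

lemma eq_one_or_eq_centre_of_affine {g : Gtilde} (hg : affine g = 1) : g = 1 ∨ g = centre := by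
  have h (v) : trans g + lin g *ᵥ v = v := by rw [← affine_apply, hg]; rfl
  have ht : trans g = 0 := by simpa using h 0
  refine eq_one_or_eq_centre (GL2_F2_eq_one_of_fixes _ fun v => ?_) ht
  rw [← zero_add (_ *ᵥ v), ← ht]
  exact h v

lemma sq_eq_one_of_proj_eq_one {g : Gtilde} (hp : proj g = 1) : g ^ 2 = 1 := by
  refine ext_parts (by simp [hp]) ?_ ?_
  · rw [sq, trans_mul, lin_of_proj_eq_one hp, Matrix.one_mulVec, trans_one]
    exact CharTwo.add_self_eq_zero _
  · rw [map_pow, map_one]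
    exact (by decide : ∀ c : Multiplicative F2, c ^ 2 = 1) _

lemma trans_conj {g u : Gtilde} (hu : proj u = 1) : trans (g * u * g⁻¹) = lin g *ᵥ trans u := by
  have h : trans (g * u * g⁻¹ * g) = trans (g * u) := by simp
  have hl : proj (g * u * g⁻¹) = 1 := by simp [hu]
  rw [trans_mul (_ * g⁻¹), trans_mul g u, lin_of_proj_eq_one hl, Matrix.one_mulVec, add_comm] at h
  exact add_left_cancel h

/-- An element of order 4 squares to a nontrivial translation of trivial character. -/
lemma proj_sq_eq_one_of_orderOf_eq_four {x : Gtilde} (hx : orderOf x = 4) :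
    proj (x ^ 2) = 1 ∧ char (x ^ 2) = 1 ∧ x ^ 2 ≠ 1 := by
  have h4 : x ^ 4 = 1 := hx ▸ pow_orderOf_eq_one x
  refine ⟨?_, ?_, fun h => ?_⟩
  · rcases GL2_F2_sq_or_cube (proj x) with h | h
    · rw [map_pow, h]
    · have h1 : proj x ^ 4 = 1 := by rw [← map_pow, h4, map_one]
      rw [pow_succ, h, one_mul] at h1
      rw [map_pow, h1, one_pow]
  · rw [map_pow]
    exact (by decide : ∀ c : Multiplicative F2, c ^ 2 = 1) _
  · have := hx ▸ orderOf_dvd_of_pow_eq_one h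
    omega

lemma cube_eq_centre_of_orderOf_eq_six {x : Gtilde} (hx : orderOf x = 6) : x ^ 3 = centre := by
  have h2 : proj x ^ 2 ≠ 1 := fun h => by
    have h4 : (x ^ 2) ^ 2 = 1 := sq_eq_one_of_proj_eq_one (by rw [map_pow, h])
    rw [← pow_mul] at h4
    have := hx ▸ orderOf_dvd_of_pow_eq_one h4
    omega
  have h3 : proj x ^ 3 = 1 := (GL2_F2_sq_or_cube (proj x)).resolve_left h2
  have hp : proj (x ^ 3) = 1 := by rw [map_pow, h3]
  have hfix : lin x *ᵥ trans (x ^ 3) = trans (x ^ 3) := by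
    rw [← trans_conj hp]
    congr 1
    group
  refine (eq_one_or_eq_centre hp (GL2_F2_fixed_eq_zero h3 h2 hfix)).resolve_left fun h => ?_
  have := hx ▸ orderOf_dvd_of_pow_eq_one h
  omega

variable {H : Subgroup Gtilde}

/-- A subgroup projecting onto `GL₂(𝔽₂)` and containing a nontrivial translation surjects onto the
permutations of the plane. -/
lemma map_affine_eq_top (hproj : H.map proj = ⊤) {u : Gtilde} (hu : u ∈ H) (hup : proj u = 1)
    (hut : trans u ≠ 0) : H.map affine = ⊤ := by
  have lift (C : GL (Fin 2) F2) : ∃ h ∈ H, proj h = C := by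
    have hC : C ∈ H.map proj := hproj ▸ Subgroup.mem_top C
    exact hC
  have translations (v : Fin 2 → F2) : ∃ t ∈ H, proj t = 1 ∧ trans t = v := by
    by_cases hv : v = 0
    · exact ⟨1, H.one_mem, map_one _, by rw [trans_one, hv]⟩
    · obtain ⟨C, hC⟩ := GL2_F2_transitive _ _ hut hv
      obtain ⟨h, hh, rfl⟩ := lift C
      exact ⟨h * u * h⁻¹, H.mul_mem (H.mul_mem hh hu) (H.inv_mem hh), by simp [hup],
        (trans_conj hup).trans hC⟩
  refine eq_top_iff.2 fun s _ => ?_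
  obtain ⟨C, hC⟩ := perm_plane_affine s
  obtain ⟨h, hh, rfl⟩ := lift C
  obtain ⟨t, ht, htp, htt⟩ := translations (s 0 - trans h)
  refine ⟨t * h, H.mul_mem ht hh, ?_⟩
  ext v : 1
  rw [affine_apply, trans_mul, lin_mul, lin_of_proj_eq_one htp, htt, hC v]
  simp [lin]

lemma exists_mulEquiv_perm_four (hH : H.map affine = ⊤) :
    ∃ K : Subgroup Gtilde, K ≤ H ∧ Nonempty (K ≃* Equiv.Perm (Fin 4)) := by
  suffices ∃ K ≤ H, K.map affine = ⊤ ∧ centre ∉ K by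
    obtain ⟨K, hKH, hK, hz⟩ := this
    obtain ⟨e⟩ := nonempty_mulEquiv_of_map_eq_top affine K hK fun x hx h =>
      (eq_one_or_eq_centre_of_affine h).resolve_right fun hxz => hz (hxz ▸ hx)
    have hcard : Fintype.card (Fin 2 → F2) = 4 := by decide
    exact ⟨K, hKH, ⟨e.trans (Fintype.equivFinOfCardEq hcard).permCongrHom⟩⟩
  by_cases hz : centre ∈ H
  · refine ⟨H ⊓ char.ker, inf_le_left, eq_top_iff.2 fun s _ => ?_, fun h => ?_⟩
    · obtain ⟨h, hh, rfl⟩ : s ∈ H.map affine := hH ▸ Subgroup.mem_top s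
      rcases char_eq_one_or (char h) with hc | hc
      · exact ⟨h, ⟨hh, hc⟩, rfl⟩
      · refine ⟨h * centre, ⟨H.mul_mem hh hz, ?_⟩, by simp [affine_centre]⟩
        change char (h * centre) = 1
        rw [map_mul, hc, char_centre]
        decide
    · have hc : char centre = 1 := h.2
      rw [char_centre] at hc
      exact absurd hc (by decide)
  · exact ⟨H, le_rfl, hH, hz⟩

lemma nonempty_mulEquiv_perm_three_prod (hproj : H.map proj = ⊤) (hz : centre ∈ H)
    (htriv : ∀ u ∈ H, proj u = 1 → char u = 1 → u = 1) :
    Nonempty (H ≃* Equiv.Perm (Fin 3) × Multiplicative (ZMod 2)) := by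
  obtain ⟨e⟩ := nonempty_GL2_F2_mulEquiv_perm
  obtain ⟨f⟩ := nonempty_mulEquiv_of_map_eq_top (proj.prod char) H
    (eq_top_iff.2 fun ⟨C, c⟩ _ => by
      obtain ⟨h, hh, rfl⟩ : C ∈ H.map proj := hproj ▸ Subgroup.mem_top C
      rcases char_eq_one_or ((char h)⁻¹ * c) with hc | hc
      · exact ⟨h, hh, Prod.ext rfl (inv_mul_eq_one.1 hc)⟩
      · refine ⟨h * centre, H.mul_mem hh hz, Prod.ext (by simp [proj_centre]) ?_⟩
        change char (h * centre) = c
        rw [map_mul, char_centre, ← hc, mul_inv_cancel_left])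
    (fun x hx h => htriv x hx (congrArg Prod.fst h) (congrArg Prod.snd h))
  exact ⟨f.trans (e.prodCongr (MulEquiv.refl _))⟩

end Gtilde

/-- If a subgroup `H` of `G̃` projects onto all of `GL₂(𝔽₂)` and contains an element
of order 4 or 6, then `H` contains a subgroup isomorphic to `S₃ × C₂` or a subgroup
isomorphic to `S₄`. -/
theorem subgroup_contains_S3xC2_or_S4 (H : Subgroup ↥Gtilde)
    (hproj : H.map (SemidirectProduct.rightHom.comp Gtilde.subtype) = ⊤)
    (horder : ∃ x ∈ H, orderOf x = 4 ∨ orderOf x = 6) :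
    (∃ K : Subgroup ↥Gtilde, K ≤ H ∧
      Nonempty (↥K ≃* Equiv.Perm (Fin 3) × Multiplicative (ZMod 2))) ∨
    (∃ K : Subgroup ↥Gtilde, K ≤ H ∧ Nonempty (↥K ≃* Equiv.Perm (Fin 4))) := by
  change H.map Gtilde.proj = ⊤ at hproj
  by_cases htriv : ∀ u ∈ H, Gtilde.proj u = 1 → Gtilde.char u = 1 → u = 1
  · obtain ⟨x, hx, h4 | h6⟩ := horder
    · obtain ⟨hp, hc, hne⟩ := Gtilde.proj_sq_eq_one_of_orderOf_eq_four h4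
      exact absurd (htriv _ (H.pow_mem hx 2) hp hc) hne
    · have hz : Gtilde.centre ∈ H :=
        Gtilde.cube_eq_centre_of_orderOf_eq_six h6 ▸ H.pow_mem hx 3
      exact .inl ⟨H, le_rfl, Gtilde.nonempty_mulEquiv_perm_three_prod hproj hz htriv⟩
  · push Not at htriv
    obtain ⟨u, hu, hp, hc, hne⟩ := htriv
    have ht : Gtilde.trans u ≠ 0 := fun ht =>
      hne (Gtilde.ext_parts (by simpa using hp) (ht.trans Gtilde.trans_one.symm)
        (by simpa using hc))
    exact .inr (Gtilde.exists_mulEquiv_perm_four (Gtilde.map_affine_eq_top hproj hu hp ht))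
end

section
/- Let ℓ be a prime, α ≥ 1 an integer, G a group, and let ρ₁, ρ₂ : G → GL₂(ℤ_ℓ) be group homomorphisms. Suppose μ : G → M₂(ℤ_ℓ) is a map satisfying ρ₁(σ) = (1 + ℓ^α·μ(σ))·ρ₂(σ) for all σ ∈ G. Then the map σ ↦ (μ(σ) mod ℓ, ρ₂(σ) mod ℓ) is a group homomorphism from G to the semidirect product M₂(𝔽_ℓ) ⋊ GL₂(𝔽_ℓ), where GL₂(𝔽_ℓ) acts on the additive group M₂(𝔽_ℓ) by conjugation, i.e. with group law (A,C)·(B,D) = (A + C B C⁻¹, C D). -/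
open Matrix

/-- The cocycle relation, up to a multiple of `a`, satisfied by the `a`-divided difference of two
representations. -/
lemma cocycle_of_eq_one_add_smul_mul {n G R : Type*} [Fintype n] [DecidableEq n] [Group G]
    [CommRing R] [IsDomain R] {a : R} (ha : a ≠ 0) (ρ₁ ρ₂ : G →* GL n R) (μ : G → Matrix n n R)
    (h : ∀ σ, (ρ₁ σ : Matrix n n R) = (1 + a • μ σ) * (ρ₂ σ : Matrix n n R)) (σ τ : G) :
    μ (σ * τ) = μ σ + ρ₂ σ * μ τ * ((ρ₂ σ)⁻¹ : GL n R) +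
      a • (μ σ * (ρ₂ σ * μ τ * ((ρ₂ σ)⁻¹ : GL n R))) := by
  have hprod : (1 + a • μ (σ * τ)) * (ρ₂ σ : Matrix n n R) =
      (1 + a • μ σ) * ρ₂ σ * (1 + a • μ τ) := by
    have hmul : (ρ₁ (σ * τ) : Matrix n n R) = ρ₁ σ * ρ₁ τ := by simp
    rw [h, h, h, map_mul, Units.val_mul, ← mul_assoc, ← mul_assoc] at hmul
    exact (ρ₂ τ).isUnit.mul_right_cancel hmul
  have hconj : 1 + a • μ (σ * τ) =
      (1 + a • μ σ) * (1 + a • (ρ₂ σ * μ τ * ((ρ₂ σ)⁻¹ : GL n R))) := by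
    apply (ρ₂ σ).isUnit.mul_right_cancel
    rw [hprod]
    simp only [mul_assoc, add_mul, mul_add, smul_mul_assoc, mul_smul_comm, Units.inv_mul,
      one_mul, mul_one]
  apply smul_right_injective _ ha
  apply add_left_cancel (a := (1 : Matrix n n R))
  dsimp only
  rw [hconj]
  simp only [add_mul, mul_add, smul_mul_assoc, mul_smul_comm, one_mul, mul_one, smul_add]
  abel

/-- Given `ρ₁, ρ₂ : G → GL₂(ℤ_ℓ)` and `μ : G → M₂(ℤ_ℓ)` with
`ρ₁(σ) = (1 + ℓ^α·μ(σ))·ρ₂(σ)` for all `σ`, the map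
`σ ↦ (μ(σ) mod ℓ, ρ₂(σ) mod ℓ)` is a homomorphism from `G` to the semidirect
product `M₂(𝔽_ℓ) ⋊ GL₂(𝔽_ℓ)` (with `GL₂(𝔽_ℓ)` acting by conjugation). -/
theorem reduction_is_group_hom (ℓ : ℕ) [Fact ℓ.Prime] (α : ℕ) (hα : 1 ≤ α)
    (G : Type) [Group G] (ρ₁ ρ₂ : G →* GL (Fin 2) ℤ_[ℓ])
    (μ : G → Matrix (Fin 2) (Fin 2) ℤ_[ℓ])
    (h : ∀ σ : G, (ρ₁ σ : Matrix (Fin 2) (Fin 2) ℤ_[ℓ]) =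
      (1 + (ℓ : ℤ_[ℓ]) ^ α • μ σ) * (ρ₂ σ : Matrix (Fin 2) (Fin 2) ℤ_[ℓ])) :
    ∀ σ τ : G,
      (⟨Multiplicative.ofAdd ((μ (σ * τ)).map PadicInt.toZMod),
          Matrix.GeneralLinearGroup.map PadicInt.toZMod (ρ₂ (σ * τ))⟩ : MGL (ZMod ℓ)) =
      (⟨Multiplicative.ofAdd ((μ σ).map PadicInt.toZMod),
          Matrix.GeneralLinearGroup.map PadicInt.toZMod (ρ₂ σ)⟩ : MGL (ZMod ℓ)) *
      (⟨Multiplicative.ofAdd ((μ τ).map PadicInt.toZMod),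
          Matrix.GeneralLinearGroup.map PadicInt.toZMod (ρ₂ τ)⟩ : MGL (ZMod ℓ)) := by
  intro σ τ
  have hℓ : (ℓ : ℤ_[ℓ]) ^ α ≠ 0 := pow_ne_zero _ (NeZero.ne _)
  have hred : PadicInt.toZMod ((ℓ : ℤ_[ℓ]) ^ α) = 0 := by
    simp [Nat.one_le_iff_ne_zero.mp hα]
  refine SemidirectProduct.ext ?_ (by simp)
  change (μ (σ * τ)).map PadicInt.toZMod = (μ σ).map PadicInt.toZMod +
    (ρ₂ σ : Matrix (Fin 2) (Fin 2) ℤ_[ℓ]).map PadicInt.toZMod * (μ τ).map PadicInt.toZMod *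
      (((Matrix.GeneralLinearGroup.map PadicInt.toZMod (ρ₂ σ))⁻¹ : GL (Fin 2) (ZMod ℓ)) :
        Matrix (Fin 2) (Fin 2) (ZMod ℓ))
  rw [← map_inv]
  change _ = _ + _ * _ *
    (((ρ₂ σ)⁻¹ : GL (Fin 2) ℤ_[ℓ]) : Matrix (Fin 2) (Fin 2) ℤ_[ℓ]).map PadicInt.toZMod
  rw [cocycle_of_eq_one_add_smul_mul hℓ ρ₁ ρ₂ μ h, ← Matrix.map_mul, ← Matrix.map_mul]
  ext i j
  simp only [Matrix.map_apply, Matrix.add_apply, Matrix.smul_apply, smul_eq_mul, map_add,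
    map_mul, hred, zero_mul, add_zero]
end

section
/- Let H be a subgroup of GL₂(𝔽₂), and consider the action of H on the 𝔽₄-vector space 𝔽₄² obtained by mapping matrix entries into 𝔽₄ via the inclusion 𝔽₂ ⊆ 𝔽₄. Then the only 𝔽₄-subspaces of 𝔽₄² invariant under every element of H are 0 and 𝔽₄² if and only if H = GL₂(𝔽₂). (In other words, the natural two-dimensional mod 2 representation of a subgroup of GL₂(𝔽₂) is absolutely irreducible exactly when the subgroup is all of GL₂(𝔽₂), a group isomorphic to S₃.) -/
open Matrix

/-- The field with four elements contains a primitive cube root of unity. -/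
lemma GaloisField.exists_sq_eq_self_add_one : ∃ x : GaloisField 2 2, x ^ 2 = x + 1 := by
  classical
  have : Fintype (GaloisField 2 2) := Fintype.ofFinite _
  have hcard : Fintype.card (GaloisField 2 2) = 4 := by
    rw [← Nat.card_eq_fintype_card, GaloisField.card 2 2 (by norm_num)]
    norm_num
  obtain ⟨x, hx⟩ : ∃ x, x ∉ ({0, 1} : Finset (GaloisField 2 2)) := by
    by_contra! h
    have hle := Finset.card_le_card fun x (_ : x ∈ Finset.univ) ↦ h x
    rw [Finset.card_univ, hcard] at hle
    exact absurd (hle.trans Finset.card_le_two) (by norm_num)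
  simp only [Finset.mem_insert, Finset.mem_singleton, not_or] at hx
  have hpow : x ^ 4 = x := hcard ▸ FiniteField.pow_card x
  have hprod : x * (x - 1) * (x ^ 2 + x + 1) = 0 := by linear_combination hpow
  refine ⟨x, ?_⟩
  have hquad := (mul_eq_zero.mp hprod).resolve_left (mul_ne_zero hx.1 (sub_ne_zero.mpr hx.2))
  linear_combination hquad - (x + 1) * CharTwo.two_eq_zero (R := GaloisField 2 2)

set_option synthInstance.maxSize 256 in
/-- Two non-commuting elements of `GL₂(𝔽₂)` generate it, by words of length at most three. -/
lemma eq_word_of_not_commute : ∀ A B C : Matrix (Fin 2) (Fin 2) (ZMod 2),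
    A.det ≠ 0 → B.det ≠ 0 → C.det ≠ 0 → A * B ≠ B * A →
      C = A ∨ C = B ∨ C = A * B ∨ C = B * A ∨ C = A * B * A ∨ C = A * A ∨ C = B * B := by
  decide +kernel

lemma Subgroup.eq_top_of_not_commute {H : Subgroup (GL (Fin 2) (ZMod 2))}
    {A B : GL (Fin 2) (ZMod 2)} (hA : A ∈ H) (hB : B ∈ H) (hAB : A * B ≠ B * A) : H = ⊤ := by
  refine (Subgroup.eq_top_iff' H).mpr fun C ↦ ?_
  have hdet (D : GL (Fin 2) (ZMod 2)) : D.val.det ≠ 0 := D.det.ne_zero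
  have h := eq_word_of_not_commute A B C (hdet A) (hdet B) (hdet C) (by
    simpa only [← Units.val_mul, ne_eq, Units.val_inj] using hAB)
  simp only [← Units.val_mul, Units.val_inj] at h
  rcases h with h | h | h | h | h | h | h <;> subst h
  exacts [hA, hB, H.mul_mem hA hB, H.mul_mem hB hA, H.mul_mem (H.mul_mem hA hB) hA,
    H.mul_mem hA hA, H.mul_mem hB hB]

/-- The centralizer of an involution in `GL₂(𝔽₂)` stabilizes a line of `𝔽₂²`; the involutions are
the elements outside the subgroup of order three. -/
lemma centralizer_stabilizes_line : ∀ A : Matrix (Fin 2) (Fin 2) (ZMod 2), A.det ≠ 0 →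
    ¬ (A 0 1 = A 1 0 ∧ A 1 1 = A 0 0 + A 0 1) →
      (∀ B, B.det ≠ 0 → A * B = B * A → B 1 0 = 0) ∨
      (∀ B, B.det ≠ 0 → A * B = B * A → B 0 1 = 0) ∨
      (∀ B, B.det ≠ 0 → A * B = B * A → B 0 0 + B 0 1 = B 1 0 + B 1 1) := by
  decide +kernel

/-- If a set of matrices has no common invariant subspace of `K²`, it has no common eigenvector. -/
lemma exists_mulVec_ne_smul {K ι : Type*} [Field K] {S : Set ι} {f : ι → Matrix (Fin 2) (Fin 2) K}
    (h : ∀ W : Submodule K (Fin 2 → K), (∀ C ∈ S, ∀ v ∈ W, f C *ᵥ v ∈ W) → W = ⊥ ∨ W = ⊤)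
    {v : Fin 2 → K} (hv : v ≠ 0) : ∃ C ∈ S, ∀ c : K, f C *ᵥ v ≠ c • v := by
  by_contra! hS
  rcases h (K ∙ v) fun C hC w hw ↦ by
    obtain ⟨a, rfl⟩ := Submodule.mem_span_singleton.mp hw
    obtain ⟨c, hc⟩ := hS C hC
    rw [mulVec_smul, hc, smul_smul]
    exact Submodule.smul_mem _ _ (Submodule.mem_span_singleton_self v) with hW | hW
  · exact hv (Submodule.span_singleton_eq_bot.mp hW)
  · have hrank := finrank_span_singleton (K := K) hv
    rw [hW, finrank_top, Module.finrank_fin_fun] at hrank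
    norm_num at hrank

/-- A subspace of `K²` stable under both elementary transvections is trivial. -/
lemma eq_bot_or_eq_top_of_transvections {K : Type*} [Field K] {W : Submodule K (Fin 2 → K)}
    (hU : ∀ v ∈ W, !![1, 1; 0, 1] *ᵥ v ∈ W) (hL : ∀ v ∈ W, !![1, 0; 1, 1] *ᵥ v ∈ W) :
    W = ⊥ ∨ W = ⊤ := by
  have hfst (v : Fin 2 → K) (hv : v ∈ W) : ![v 1, 0] ∈ W := by
    convert W.sub_mem (hU v hv) hv using 1
    ext i; fin_cases i <;> simp [dotProduct]
  have hsnd (v : Fin 2 → K) (hv : v ∈ W) : ![0, v 0] ∈ W := by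
    convert W.sub_mem (hL v hv) hv using 1
    ext i; fin_cases i <;> simp [dotProduct]
  refine or_iff_not_imp_left.mpr fun hW ↦ ?_
  obtain ⟨v, hv, hv0⟩ := W.ne_bot_iff.mp hW
  obtain ⟨a, ha, haW⟩ : ∃ a : K, a ≠ 0 ∧ ![a, 0] ∈ W := by
    by_cases h1 : v 1 = 0
    · refine ⟨v 0, fun h0 ↦ hv0 ?_, by simpa using hfst _ (hsnd v hv)⟩
      ext i; fin_cases i <;> assumption
    · exact ⟨v 1, h1, hfst v hv⟩
  have haW' : ![0, a] ∈ W := by simpa using hsnd _ haW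
  refine (Submodule.eq_top_iff').mpr fun w ↦ ?_
  convert W.add_mem (W.smul_mem (w 0 / a) haW) (W.smul_mem (w 1 / a) haW') using 1
  ext i; fin_cases i <;> simp [ha]

/-- The natural two-dimensional representation of a subgroup `H ≤ GL₂(𝔽₂)` on `𝔽₄²`
(via the inclusion `𝔽₂ ⊆ 𝔽₄`) has no nontrivial invariant `𝔽₄`-subspace if and only
if `H` is all of `GL₂(𝔽₂)` (a group isomorphic to `S₃`). -/
theorem absolutely_irreducible_iff_top (H : Subgroup (GL (Fin 2) (ZMod 2))) :
    (∀ W : Submodule (GaloisField 2 2) (Fin 2 → GaloisField 2 2),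
      (∀ C ∈ H, ∀ v ∈ W,
        Matrix.mulVec
          ((C : Matrix (Fin 2) (Fin 2) (ZMod 2)).map
            (algebraMap (ZMod 2) (GaloisField 2 2))) v ∈ W) →
      W = ⊥ ∨ W = ⊤) ↔ H = ⊤ := by
  constructor
  · intro h
    let φ := algebraMap (ZMod 2) (GaloisField 2 2)
    have hdet (D : GL (Fin 2) (ZMod 2)) : D.val.det ≠ 0 := D.det.ne_zero
    have hmoved {v : Fin 2 → GaloisField 2 2} (hv : v ≠ 0) :
        ∃ C ∈ H, ∀ c : GaloisField 2 2, C.val.map φ *ᵥ v ≠ c • v :=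
      exists_mulVec_ne_smul (S := (H : Set (GL (Fin 2) (ZMod 2)))) h hv
    obtain ⟨x, hx⟩ := GaloisField.exists_sq_eq_self_add_one
    obtain ⟨A, hA, hAx⟩ := hmoved (v := ![1, x]) fun h ↦ by simpa using congrFun h 0
    have hA_inv : ¬ (A.val 0 1 = A.val 1 0 ∧ A.val 1 1 = A.val 0 0 + A.val 0 1) := by
      rintro ⟨h01, h11⟩
      refine hAx (φ (A.val 0 0) + φ (A.val 0 1) * x) ?_
      ext i
      fin_cases i
      · simp [mulVec, dotProduct]
      · simp [mulVec, dotProduct, ← h01, h11]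
        linear_combination -φ (A.val 0 1) * hx
    by_contra hH
    have hcomm {B : GL (Fin 2) (ZMod 2)} (hB : B ∈ H) : A.val * B.val = B.val * A.val := by
      by_contra hAB
      exact hH (Subgroup.eq_top_of_not_commute hA hB fun h ↦ hAB (congrArg Units.val h))
    rcases centralizer_stabilizes_line A (hdet A) hA_inv with hline | hline | hline
    · obtain ⟨B, hB, hBv⟩ := hmoved (v := ![1, 0]) fun h ↦ by simpa using congrFun h 0
      refine hBv (φ (B.val 0 0)) ?_
      have := hline B (hdet B) (hcomm hB)
      ext i; fin_cases i <;> simp [mulVec, dotProduct, this]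
    · obtain ⟨B, hB, hBv⟩ := hmoved (v := ![0, 1]) fun h ↦ by simpa using congrFun h 1
      refine hBv (φ (B.val 1 1)) ?_
      have := hline B (hdet B) (hcomm hB)
      ext i; fin_cases i <;> simp [mulVec, dotProduct, this]
    · obtain ⟨B, hB, hBv⟩ := hmoved (v := ![1, 1]) fun h ↦ by simpa using congrFun h 0
      refine hBv (φ (B.val 0 0 + B.val 0 1)) ?_
      have := hline B (hdet B) (hcomm hB)
      ext i; fin_cases i
      · simp [mulVec, dotProduct]
      · simp [mulVec, dotProduct, this]
  · rintro rfl W hW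
    refine eq_bot_or_eq_top_of_transvections (fun v hv ↦ ?_) fun v hv ↦ ?_
    · convert hW (GeneralLinearGroup.mkOfDetNeZero !![1, 1; 0, 1] (by simp [det_fin_two]))
        trivial v hv
      ext i j; fin_cases i <;> fin_cases j <;> simp [GeneralLinearGroup.mkOfDetNeZero]
    · convert hW (GeneralLinearGroup.mkOfDetNeZero !![1, 0; 1, 1] (by simp [det_fin_two]))
        trivial v hv
      ext i j; fin_cases i <;> fin_cases j <;> simp [GeneralLinearGroup.mkOfDetNeZero]
end

section
/- Let t ∈ ℂ and let F(x,y,z) = x(x−z)(y−z) + t·y·z·(x−y), the cubic pencil defining Beauville's modular elliptic surface S₁(5) of level 5. The projective plane cubic F = 0 has a singular point, i.e. there exists (x, y, z) ≠ (0, 0, 0) in ℂ³ at which all three partial derivatives of F vanish, if and only if t·(t² − 11t − 1) = 0, i.e. if and only if t = 0 or t = (11 ± 5√5)/2. -/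
open MvPolynomial

/-- The vanishing of the three partial derivatives of Beauville's cubic, in coordinates. -/
lemma beauville_S15_pderiv_eq_zero_iff (t : ℂ) (v : Fin 3 → ℂ) :
    (∀ i : Fin 3, eval v (pderiv i
      (X 0 * (X 0 - X 2) * (X 1 - X 2) + C t * X 1 * X 2 * (X 0 - X 1) :
        MvPolynomial (Fin 3) ℂ)) = 0) ↔
      (2 * v 0 - v 2) * (v 1 - v 2) + t * v 1 * v 2 = 0 ∧
      v 0 * (v 0 - v 2) + t * v 2 * (v 0 - 2 * v 1) = 0 ∧
      v 0 * (2 * v 2 - v 0 - v 1) + t * v 1 * (v 0 - v 1) = 0 := by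
  simp only [Fin.forall_fin_succ, IsEmpty.forall_iff, and_true]
  simp [pderiv_X]
  refine and_congr ?_ (and_congr ?_ ?_) <;> exact Eq.congr_left (by ring)

/-- A singular point of Beauville's cubic forces the parameter to be a root of the
discriminant. -/
lemma beauville_S15_discriminant_eq_zero {t x y z : ℂ} (ht : t ≠ 0)
    (hne : ¬(x = 0 ∧ y = 0 ∧ z = 0))
    (hx : (2 * x - z) * (y - z) + t * y * z = 0)
    (hy : x * (x - z) + t * z * (x - 2 * y) = 0)
    (hz : x * (2 * z - x - y) + t * y * (x - y) = 0) :
    t ^ 2 - 11 * t - 1 = 0 := by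
  have hz0 : z ≠ 0 := by
    rintro rfl
    have hx0 : x = 0 := by simpa using hy
    subst hx0
    exact hne ⟨rfl, by simpa [ht] using hz, rfl⟩
  have hconic : x * z = 2 * y * z - y ^ 2 := by
    have h : t * z * (x * z - (2 * y * z - y ^ 2)) = 0 := by
      linear_combination (x * hx + y * hy + z * hz) / 3 + (z - y) * hy
    simpa [ht, hz0, sub_eq_zero] using h
  have hy0 : y ≠ 0 := by
    rintro rfl
    have hx0 : x = 0 := by simpa [hz0] using hconic
    subst hx0
    simp [hz0] at hx
  have hcubic : t * y * z ^ 2 = (y - 2 * z) * (y - z) ^ 2 := by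
    have h : y * z * (t * y * z ^ 2 - (y - 2 * z) * (y - z) ^ 2) = 0 := by
      linear_combination z ^ 2 * ((x * hx + y * hy + z * hz) / 3 - y * hy) +
        z * (x * z + 2 * y * z - y ^ 2 - z ^ 2) * hconic
    simpa [hy0, hz0, sub_eq_zero] using h
  have hyz : y - z ≠ 0 := by
    intro h
    rw [h] at hcubic
    simp [ht, hy0, hz0] at hcubic
  have hgold : y ^ 2 = y * z + z ^ 2 := by
    have h : (y - z) * (y ^ 2 - (y * z + z ^ 2)) = 0 := by
      linear_combination hcubic + 2 * (y - z) * hconic - z * hx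
    simpa [hyz, sub_eq_zero] using h
  have ht5 : t * z = 8 * z - 5 * y := by
    have h : y * z * (t * z - (8 * z - 5 * y)) = 0 := by
      linear_combination hcubic + (y + 2 * z) * hgold
    simpa [hy0, hz0, sub_eq_zero] using h
  have h : z ^ 2 * (t ^ 2 - 11 * t - 1) = 0 := by
    linear_combination (t * z + 8 * z - 5 * y - 11 * z) * ht5 + 25 * hgold
  simpa [hz0] using h

/-- The member of Beauville's pencil `x(x−z)(y−z) + t·y·z·(x−y) = 0` (defining the
modular elliptic surface `S₁(5)`) has a singular point — a nonzero point where all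
three partial derivatives vanish — iff `t·(t² − 11t − 1) = 0`, i.e. iff `t = 0` or
`t = (11 ± 5√5)/2`. -/
theorem beauville_S15_pencil_singular_iff (t : ℂ) :
    ((∃ v : Fin 3 → ℂ, v ≠ 0 ∧ ∀ i : Fin 3,
        eval v (pderiv i
          (X 0 * (X 0 - X 2) * (X 1 - X 2) + C t * X 1 * X 2 * (X 0 - X 1) :
            MvPolynomial (Fin 3) ℂ)) = 0) ↔
      t * (t ^ 2 - 11 * t - 1) = 0) ∧
    (t * (t ^ 2 - 11 * t - 1) = 0 ↔
      t = 0 ∨ t = (11 + 5 * Real.sqrt 5) / 2 ∨ t = (11 - 5 * Real.sqrt 5) / 2) := by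
  constructor
  · simp only [beauville_S15_pderiv_eq_zero_iff]
    constructor
    · rintro ⟨v, hv, hx, hy, hz⟩
      by_cases ht : t = 0
      · simp [ht]
      · rw [beauville_S15_discriminant_eq_zero ht _ hx hy hz, mul_zero]
        rintro ⟨h0, h1, h2⟩
        exact hv (by ext i; fin_cases i <;> assumption)
    · intro h
      rcases mul_eq_zero.mp h with rfl | h
      · exact ⟨![0, 1, 0], fun h => by simpa using congrFun h 1, by simp⟩
      · refine ⟨![3 - t, 8 - t, 5], fun h => by simpa using congrFun h 2, ?_⟩
        simp only [Matrix.cons_val]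
        refine ⟨?_, ?_, ?_⟩
        · linear_combination (-3) * h
        · linear_combination 6 * h
        · linear_combination 3 * h
  · have h5 : ((Real.sqrt 5 : ℝ) : ℂ) ^ 2 = 5 := by
      rw [← Complex.ofReal_pow, Real.sq_sqrt (by norm_num)]
      norm_num
    have hfactor : t ^ 2 - 11 * t - 1 =
        (t - (11 + 5 * Real.sqrt 5) / 2) * (t - (11 - 5 * Real.sqrt 5) / 2) := by
      linear_combination (25 / 4) * h5
    rw [hfactor, mul_eq_zero, mul_eq_zero, sub_eq_zero, sub_eq_zero]
end

section
/- Let t ∈ ℂ and let F(x,y,z) = (x+y+z)(121·x·y + 121·y·z + 125·z·x) − (88t + 125)·x·y·z (which is 88 times the cubic (x+y+z)((11/8)xy + (11/8)yz + (125/88)zx) − (t + 125/88)xyz). The projective plane cubic F = 0 has a singular point, i.e. there exists (x, y, z) ≠ (0, 0, 0) in ℂ³ at which all three partial derivatives of F vanish, if and only if t·(88t + 125)·(t² − 11t − 1) = 0, i.e. if and only if t ∈ {0, −125/88, (11 ± 5√5)/2}. -/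
open MvPolynomial

/-- The explicit form of the three vanishing partial derivatives. -/
lemma eval_pderiv_pencil_eq_zero_iff (t : ℂ) (v : Fin 3 → ℂ) :
    (∀ i : Fin 3,
        eval v (pderiv i
          ((X 0 + X 1 + X 2) *
              (C 121 * (X 0 * X 1) + C 121 * (X 1 * X 2) + C 125 * (X 2 * X 0)) -
            C (88 * t + 125) * (X 0 * X 1 * X 2) : MvPolynomial (Fin 3) ℂ)) = 0) ↔
      (121 * v 0 * v 1 + 121 * v 1 * v 2 + 125 * v 2 * v 0 +
          (v 0 + v 1 + v 2) * (121 * v 1 + 125 * v 2) - (88 * t + 125) * (v 1 * v 2) = 0) ∧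
      (121 * v 0 * v 1 + 121 * v 1 * v 2 + 125 * v 2 * v 0 +
          (v 0 + v 1 + v 2) * (121 * v 0 + 121 * v 2) - (88 * t + 125) * (v 0 * v 2) = 0) ∧
      (121 * v 0 * v 1 + 121 * v 1 * v 2 + 125 * v 2 * v 0 +
          (v 0 + v 1 + v 2) * (121 * v 1 + 125 * v 0) - (88 * t + 125) * (v 0 * v 1) = 0) := by
  simp only [Fin.forall_fin_succ, Fin.succ_zero_eq_one, Fin.succ_one_eq_two, IsEmpty.forall_iff,
    and_true, map_sub, map_add, Derivation.leibniz, pderiv_X, pderiv_C, smul_eq_mul, map_mul,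
    eval_X, eval_C, Pi.single_apply]
  simp
  refine and_congr ?_ (and_congr ?_ ?_) <;>
    exact ⟨fun h => by linear_combination h, fun h => by linear_combination h⟩

/-- A singular point of the pencil member forces the discriminant condition on `t`. -/
lemma discriminant_eq_zero_of_singular {t x y z : ℂ} (hne : ¬(x = 0 ∧ y = 0 ∧ z = 0))
    (h₁ : 121 * x * y + 121 * y * z + 125 * z * x +
      (x + y + z) * (121 * y + 125 * z) - (88 * t + 125) * (y * z) = 0)
    (h₂ : 121 * x * y + 121 * y * z + 125 * z * x +
      (x + y + z) * (121 * x + 121 * z) - (88 * t + 125) * (x * z) = 0)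
    (h₃ : 121 * x * y + 121 * y * z + 125 * z * x +
      (x + y + z) * (121 * y + 125 * x) - (88 * t + 125) * (x * y) = 0) :
    t * (88 * t + 125) * (t ^ 2 - 11 * t - 1) = 0 := by
  have eq_zero_of_restrict : ∀ a b : ℂ, 2 * a * b + b ^ 2 = 0 → 2 * a * b + a ^ 2 = 0 →
      a = 0 ∧ b = 0 := by
    intro a b hb ha
    have hb3 : b ^ 3 = 0 := by linear_combination (2 * a / 3 + b) * hb - (4 * b / 3) * ha
    have hb0 : b = 0 := by simpa using hb3
    subst hb0
    exact ⟨by simpa using ha, rfl⟩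
  have hx : x ≠ 0 := by
    rintro rfl
    obtain ⟨hy, hz⟩ := eq_zero_of_restrict y z (by linear_combination h₂ / 121)
      (by linear_combination h₃ / 121)
    exact hne ⟨rfl, hy, hz⟩
  have hy : y ≠ 0 := by
    rintro rfl
    obtain ⟨hx, hz⟩ := eq_zero_of_restrict x z (by linear_combination h₁ / 125)
      (by linear_combination h₃ / 125)
    exact hne ⟨hx, rfl, hz⟩
  have hz : z ≠ 0 := by
    rintro rfl
    obtain ⟨hx, hy⟩ := eq_zero_of_restrict x y (by linear_combination h₁ / 121)
      (by linear_combination h₂ / 121)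
    exact hne ⟨hx, hy, rfl⟩
  obtain ⟨S, hS⟩ : ∃ S, S = x + y + z := ⟨_, rfl⟩
  obtain ⟨Q, hQ⟩ : ∃ Q, Q = 121 * x * y + 121 * y * z + 125 * z * x := ⟨_, rfl⟩
  have hF : S * Q = (88 * t + 125) * (x * y * z) := by
    rw [hS, hQ]; linear_combination (x * h₁ + y * h₂ + z * h₃) / 3
  have hxQ : x * Q = 121 * S * (y * z) := by
    rw [hS, hQ] at *; linear_combination x * h₁ - hF
  have hyQ : y * Q = 125 * S * (x * z) := by
    rw [hS, hQ] at *; linear_combination y * h₂ - hF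
  have hzQ : z * Q = 121 * S * (x * y) := by
    rw [hS, hQ] at *; linear_combination z * h₃ - hF
  by_cases hS0 : S = 0
  · have : 88 * t + 125 = 0 := by
      rw [hS0, zero_mul] at hF
      simpa [hx, hy, hz] using hF.symm
    rw [this]; ring
  have hxz : (z - x) * (z + x) = 0 := by
    have : S * y * ((z - x) * (z + x)) = 0 := by linear_combination (x * hzQ - z * hxQ) / 121
    simpa [hS0, hy] using this
  have hxy : 125 * x ^ 2 = 121 * y ^ 2 := by
    have : S * z * (125 * x ^ 2 - 121 * y ^ 2) = 0 := by linear_combination y * hxQ - x * hyQ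
    exact sub_eq_zero.mp (by simpa [hS0, hz] using this)
  rcases mul_eq_zero.mp hxz with h | h
  · obtain rfl : z = x := sub_eq_zero.mp h
    have hlin : 11 * y = (2 * t - 11) * z := by
      have : z * y * (11 * y - (2 * t - 11) * z) = 0 := by
        rw [hS, hQ] at hF
        linear_combination (hF - 2 * z * hxy) / 44
      exact sub_eq_zero.mp (by simpa [hz, hy] using this)
    have : z ^ 2 * (t ^ 2 - 11 * t - 1) = 0 := by
      linear_combination (-hxy - (11 * y + (2 * t - 11) * z) * hlin) / 4
    have : t ^ 2 - 11 * t - 1 = 0 := by simpa [hz] using this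
    rw [this, mul_zero]
  · obtain rfl : z = -x := eq_neg_of_add_eq_zero_left h
    have : t * (x ^ 2 * y) = 0 := by
      rw [hS, hQ] at hF
      linear_combination hF / 88
    have : t = 0 := by simpa [hx, hy] using this
    rw [this]; ring

/-- The square root of `5`, squared in `ℂ`. -/
lemma ofReal_sqrt_five_sq : ((Real.sqrt 5 : ℝ) : ℂ) ^ 2 = 5 := by
  norm_cast
  simp

/-- The member of the pencil
`(x+y+z)(121xy + 121yz + 125zx) − (88t + 125)xyz = 0`
(88 times the cubic `(x+y+z)((11/8)xy + (11/8)yz + (125/88)zx) − (t + 125/88)xyz`)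
has a singular point — a nonzero point where all three partial derivatives vanish —
iff `t·(88t + 125)·(t² − 11t − 1) = 0`, i.e. iff `t ∈ {0, −125/88, (11 ± 5√5)/2}`. -/
theorem pencil_W2_singular_iff (t : ℂ) :
    ((∃ v : Fin 3 → ℂ, v ≠ 0 ∧ ∀ i : Fin 3,
        eval v (pderiv i
          ((X 0 + X 1 + X 2) *
              (C 121 * (X 0 * X 1) + C 121 * (X 1 * X 2) + C 125 * (X 2 * X 0)) -
            C (88 * t + 125) * (X 0 * X 1 * X 2) : MvPolynomial (Fin 3) ℂ)) = 0) ↔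
      t * (88 * t + 125) * (t ^ 2 - 11 * t - 1) = 0) ∧
    (t * (88 * t + 125) * (t ^ 2 - 11 * t - 1) = 0 ↔
      t = 0 ∨ t = -125 / 88 ∨
        t = (11 + 5 * Real.sqrt 5) / 2 ∨ t = (11 - 5 * Real.sqrt 5) / 2) := by
  constructor
  · simp only [eval_pderiv_pencil_eq_zero_iff]
    constructor
    · rintro ⟨v, hv, h₁, h₂, h₃⟩
      refine discriminant_eq_zero_of_singular (fun h => hv ?_) h₁ h₂ h₃
      ext i
      fin_cases i
      exacts [h.1, h.2.1, h.2.2]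
    · intro h
      rcases mul_eq_zero.mp h with h | h
      · rcases mul_eq_zero.mp h with rfl | h
        · have h5 := ofReal_sqrt_five_sq
          refine ⟨![11, 5 * Real.sqrt 5, -11], fun h0 => by simpa using congrFun h0 0, ?_⟩
          simp only [Matrix.cons_val]
          refine ⟨?_, ?_, ?_⟩
          · linear_combination 3025 * h5
          · ring
          · linear_combination 3025 * h5
        · obtain ⟨r, hr⟩ := IsAlgClosed.exists_pow_nat_eq (-44875 : ℂ) (n := 2) (by norm_num)
          refine ⟨![-117 + r, -125 - r, 242], fun h0 => by simpa using congrFun h0 2, ?_⟩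
          simp only [Matrix.cons_val, h]
          refine ⟨?_, ?_, ?_⟩ <;> linear_combination (-121) * hr
      · refine ⟨![11, 2 * t - 11, 11], fun h0 => by simpa using congrFun h0 0, ?_⟩
        simp only [Matrix.cons_val]
        refine ⟨?_, ?_, ?_⟩
        · linear_combination (-1452) * h
        · ring
        · linear_combination (-1452) * h
  · have h5 := ofReal_sqrt_five_sq
    have hquad : t ^ 2 - 11 * t - 1 =
        (t - (11 + 5 * Real.sqrt 5) / 2) * (t - (11 - 5 * Real.sqrt 5) / 2) := by
      linear_combination (25 / 4) * h5
    have hlin : 88 * t + 125 = 88 * (t - -125 / 88) := by ring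
    rw [hquad, hlin]
    simp [sub_eq_zero, or_assoc]
end

section
/- Let d be a squarefree integer with d ≠ 0 and d ≠ 1, and let K = ℚ(√d) be the quadratic number field obtained by adjoining a square root of d to ℚ. Then every prime number dividing the discriminant of K lies in {2, 3} (equivalently, K is unramified at every prime p ∉ {2, 3}) if and only if d ∈ {−1, 2, −2, 3, −3, 6, −6}. -/
open NumberField Polynomial

/-- A squarefree integer other than `1` is not the square of a rational number. -/
theorem Squarefree.ne_rat_sq {d : ℤ} (hd : Squarefree d) (h1 : d ≠ 1) (q : ℚ) :
    q ^ 2 ≠ (d : ℚ) := by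
  intro hq
  have hsq : IsSquare d := Rat.isSquare_intCast_iff.mp ⟨q, by rw [← hq, sq]⟩
  obtain ⟨r, rfl⟩ := hsq
  exact h1 (Int.isUnit_mul_self (hd r dvd_rfl))

/-- In a quadratic field, a square root of a non-square rational has trace zero. -/
theorem Algebra.trace_eq_zero_of_sq_eq {K : Type*} [Field K] [NumberField K]
    {a : ℚ} (ha : ∀ q : ℚ, q ^ 2 ≠ a) {x : K} (hx : x ^ 2 = algebraMap ℚ K a) :
    Algebra.trace ℚ K x = 0 := by
  have hmin : minpoly ℚ x = X ^ 2 - C a :=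
    (minpoly.eq_of_irreducible_of_monic (X_pow_sub_C_irreducible_of_prime Nat.prime_two ha)
      (by simp [hx]) (monic_X_pow_sub_C a two_ne_zero)).symm
  rw [trace_eq_finrank_mul_minpoly_nextCoeff, hmin]
  simp [nextCoeff]

/-- For squarefree `d ≠ 1`, the order `ℤ[√d]` has discriminant `4 * d`, which differs from the
discriminant of the quadratic field `ℚ(√d)` by the square of an integer. -/
theorem NumberField.exists_four_mul_eq_sq_mul_discr {d : ℤ} (hd : Squarefree d) (h1 : d ≠ 1)
    {K : Type*} [Field K] [NumberField K] (hK : Module.finrank ℚ K = 2)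
    {x : K} (hx : x ^ 2 = (d : K)) :
    ∃ c : ℤ, 4 * d = c ^ 2 * discr K := by
  have hint : IsIntegral ℤ x := .of_pow two_pos (hx ▸ isIntegral_algebraMap (x := d))
  let y : 𝓞 K := ⟨x, hint⟩
  have hy : y * y = algebraMap ℤ (𝓞 K) d := by
    apply RingOfIntegers.ext
    exact (sq x).symm.trans (hx.trans (by simp))
  have hrank : Module.finrank ℤ (𝓞 K) = 2 := by rw [RingOfIntegers.rank, hK]
  let b : Module.Basis (Fin 2) ℤ (𝓞 K) := Module.finBasisOfFinrankEq ℤ (𝓞 K) hrank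
  have htrace : Algebra.trace ℤ (𝓞 K) y = 0 := by
    have h : Algebra.trace ℚ K (y : K) = 0 :=
      Algebra.trace_eq_zero_of_sq_eq (a := d) (hd.ne_rat_sq h1) (hx.trans (by simp))
    rw [← Algebra.coe_trace_int] at h
    exact_mod_cast h
  refine ⟨(b.toMatrix ![1, y]).det, ?_⟩
  have hdiscr := Algebra.discr_of_matrix_vecMul (A := ℤ) (b : Fin 2 → 𝓞 K) (b.toMatrix ![1, y])
  rw [b.toMatrix_map_vecMul, discr_eq_discr] at hdiscr
  rw [← hdiscr, Algebra.discr_def, Matrix.det_fin_two]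
  have hone : Algebra.trace ℤ (𝓞 K) 1 = 2 := by
    simpa [hrank] using Algebra.trace_algebraMap (R := ℤ) (S := 𝓞 K) 1
  simp only [Algebra.traceMatrix_apply, Algebra.traceForm_apply, Matrix.cons_val_zero,
    Matrix.cons_val_one, mul_one, one_mul, htrace, hone, hy, Algebra.trace_algebraMap, hrank]
  simp
  ring

/-- A squarefree integer whose prime divisors all lie in `{2, 3}` divides `6`. -/
theorem Squarefree.dvd_six {d : ℤ} (hd : Squarefree d)
    (h : ∀ p : ℕ, p.Prime → (p : ℤ) ∣ d → p = 2 ∨ p = 3) : d ∣ 6 := by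
  rw [← Int.natAbs_dvd_natAbs, ← Nat.prod_primeFactors_of_squarefree (Int.squarefree_natAbs.2 hd)]
  have hsub : d.natAbs.primeFactors ⊆ {2, 3} := fun p hp ↦ by
    simpa using h p (Nat.prime_of_mem_primeFactors hp)
      (Int.natCast_dvd.2 (Nat.dvd_of_mem_primeFactors hp))
  simpa using Finset.prod_dvd_prod_of_subset _ _ (fun p ↦ p) hsub


/-- Let `d` be a squarefree integer, `d ∉ {0, 1}`, and let `K = ℚ(√d)` be the
quadratic number field obtained by adjoining a square root of `d` to `ℚ`. Then every
prime dividing the discriminant of `K` lies in `{2, 3}` (i.e. `K` is unramified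
outside `{2, 3}`) iff `d ∈ {−1, 2, −2, 3, −3, 6, −6}`. -/
theorem quadratic_field_unramified_outside_two_three (d : ℤ)
    (hsf : Squarefree d) (h0 : d ≠ 0) (h1 : d ≠ 1)
    (K : Type) [Field K] [NumberField K] (hK : Module.finrank ℚ K = 2)
    (x : K) (hx : x ^ 2 = (d : K)) :
    (∀ p : ℕ, p.Prime → (p : ℤ) ∣ NumberField.discr K → p ∈ ({2, 3} : Set ℕ)) ↔
      d ∈ ({-1, 2, -2, 3, -3, 6, -6} : Set ℤ) := by
  obtain ⟨c, hc⟩ := NumberField.exists_four_mul_eq_sq_mul_discr hsf h1 hK hx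
  simp only [Set.mem_insert_iff, Set.mem_singleton_iff]
  constructor
  · intro h
    have hd6 : d ∣ 6 := by
      refine hsf.dvd_six fun p hp hpd ↦ ?_
      by_contra hne
      have hpZ : Prime (p : ℤ) := Nat.prime_iff_prime_int.1 hp
      have hpc : (p : ℤ) ∣ c := by
        have hdvd : (p : ℤ) ∣ c ^ 2 * discr K := hc ▸ hpd.mul_left 4
        exact hpZ.dvd_of_dvd_pow ((hpZ.dvd_or_dvd hdvd).resolve_right fun hD ↦ hne (h p hp hD))
      have hcop : IsCoprime ((p : ℤ) * p) 4 := by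
        have h2 : p.Coprime 2 := (Nat.coprime_primes hp Nat.prime_two).2 fun h2 ↦ hne (.inl h2)
        have h4 : (p * p).Coprime 4 :=
          .mul_left (h2.mul_right h2 : p.Coprime (2 * 2)) (h2.mul_right h2)
        exact_mod_cast Nat.isCoprime_iff_coprime.2 h4
      have hsq : (p : ℤ) * p ∣ 4 * d := by
        rw [hc, sq]
        exact (mul_dvd_mul hpc hpc).mul_right _
      exact hpZ.not_isUnit (hsf _ (hcop.dvd_of_dvd_mul_left hsq))
    have hle : d ≤ 6 := Int.le_of_dvd (by norm_num) hd6
    have hge : -d ≤ 6 := Int.le_of_dvd (by norm_num) (neg_dvd.2 hd6)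
    have hlow : -6 ≤ d := by omega
    interval_cases d <;> first | omega | exact absurd hd6 (by decide)
  · intro hd p hp hpD
    have hd6 : d ∣ 6 := by rcases hd with rfl | rfl | rfl | rfl | rfl | rfl | rfl <;> decide
    have h24 : (p : ℤ) ∣ 4 * 6 := (hc ▸ hpD.mul_left _ : (p : ℤ) ∣ 4 * d).trans
      (mul_dvd_mul_left 4 hd6)
    have h24' : p ∣ 2 ^ 3 * 3 := by exact_mod_cast h24
    rcases hp.dvd_mul.1 h24' with h2 | h3
    · exact .inl ((Nat.prime_dvd_prime_iff_eq hp Nat.prime_two).1 (hp.dvd_of_dvd_pow h2))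
    · exact .inr ((Nat.prime_dvd_prime_iff_eq hp Nat.prime_three).1 h3)
end
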